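/- Every locally discrete midpoint convex function f : ℤⁿ → ℝ ∪ {+∞} is integrally convex, i.e., its local convex envelope f̃ is a convex function on ℝⁿ. -/

import Mathlib

/-- The ℓ∞-norm of an integer vector, as a natural number. -/
def linf {n : ℕ} (z : Fin n → ℤ) : ℕ :=
  Finset.univ.sup fun i => (z i).natAbs

/-- Componentwise round-up of (x+y)/2. -/
def avgUp {n : ℕ} (x y : Fin n → ℤ) : Fin n → ℤ :=
  fun i => ⌈((x i + y i : ℚ)) / 2⌉

/-- Componentwise round-down of (x+y)/2. -/
def avgDown {n : ℕ} (x y : Fin n → ℤ) : Fin n → ℤ :=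
  fun i => ⌊((x i + y i : ℚ)) / 2⌋

/-- A set `S ⊆ ℤⁿ` is discrete midpoint convex. -/
def DMCSet {n : ℕ} (S : Set (Fin n → ℤ)) : Prop :=
  ∀ ⦃x⦄, x ∈ S → ∀ ⦃y⦄, y ∈ S → 2 ≤ linf (x - y) →
    avgUp x y ∈ S ∧ avgDown x y ∈ S

/-- `f` satisfies discrete midpoint convexity for the pair `(x, y)`.
Values are in `ℝ ∪ {+∞}`, modeled as `EReal` together with the hypothesis
that `f` never takes the value `⊥`. -/
def DMCPair {n : ℕ} (f : (Fin n → ℤ) → EReal) (x y : Fin n → ℤ) : Prop :=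
  f (avgUp x y) + f (avgDown x y) ≤ f x + f y

/-- `f` is globally discrete midpoint convex. -/
def GloballyDMC {n : ℕ} (f : (Fin n → ℤ) → EReal) : Prop :=
  ∀ x y : Fin n → ℤ, 2 ≤ linf (x - y) → DMCPair f x y

/-- The effective domain of `f`. -/
def effDom {n : ℕ} (f : (Fin n → ℤ) → EReal) : Set (Fin n → ℤ) :=
  {x | f x ≠ ⊤}

/-- `f` is locally discrete midpoint convex. -/
def LocallyDMC {n : ℕ} (f : (Fin n → ℤ) → EReal) : Prop :=
  DMCSet (effDom f) ∧ ∀ x y : Fin n → ℤ, linf (x - y) = 2 → DMCPair f x y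

/-- The integral neighborhood of a real point. -/
def intNbhd {n : ℕ} (x : Fin n → ℝ) : Set (Fin n → ℤ) :=
  {z | ∀ i, |x i - (z i : ℝ)| < 1}

/-- The local convex envelope `f̃` of `f`: at `x ∈ ℝⁿ`, the infimum of
`Σ_z λ_z f(z)` over convex combinations `x = Σ_z λ_z z` of points `z` of the
integral neighborhood `N(x)`. -/
noncomputable def envelope {n : ℕ} (f : (Fin n → ℤ) → EReal)
    (x : Fin n → ℝ) : EReal :=
  sInf { v : EReal | ∃ (t : Finset (Fin n → ℤ)) (lam : (Fin n → ℤ) → ℝ),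
    (∀ z ∈ t, z ∈ intNbhd x) ∧ (∀ z ∈ t, 0 ≤ lam z) ∧
    (∑ z ∈ t, lam z) = 1 ∧
    (∀ i, (∑ z ∈ t, lam z * (z i : ℝ)) = x i) ∧
    v = ∑ z ∈ t, ((lam z : EReal) * f z) }

/-- `f` is integrally convex: its local convex envelope is convex on `ℝⁿ`. -/
def IntegrallyConvexFn {n : ℕ} (f : (Fin n → ℤ) → EReal) : Prop :=
  ∀ (u v : Fin n → ℝ) (a b : ℝ), 0 ≤ a → 0 ≤ b → a + b = 1 →
    envelope f (a • u + b • v) ≤ (a : EReal) * envelope f u + (b : EReal) * envelope f v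

/-!
In a convex combination of points of the effective domain, mass carried by two points at distance
at least `2` can be moved to their rounded midpoints. This preserves the barycenter, does not raise
the cost when discrete midpoint convexity applies to the pair, and strictly lowers the quadratic
moment. So among the combinations with a given barycenter `x` and no greater cost, one of minimal
quadratic moment is supported on points pairwise at distance at most `1`, hence on `N(x)`. With zero
cost this shows that the domain of the envelope is convex. If `‖p - q‖∞ ≤ 1`, then `N(p)` and `N(q)`
lie in a common box of side `2`, where all pairs at distance at least `2` are at distance exactly
`2`; this makes the envelope convex on the segment `[p, q]`, and convexity on short segments implies
convexity.
-/

open Set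

section LocalToGlobal

variable {E : Type*} [SeminormedAddCommGroup E] [NormedSpace ℝ E] {D : Set E} {G : E → ℝ} {r : ℝ}

/-- Convexity of `G` on `D` restricted to segments of length at most `r`. -/
def ConvexAtScale (D : Set E) (G : E → ℝ) (r : ℝ) : Prop :=
  ∀ p ∈ D, ∀ q ∈ D, dist p q ≤ r → ∀ t ∈ Icc (0 : ℝ) 1,
    G (AffineMap.lineMap p q t) ≤ AffineMap.lineMap (G p) (G q) t

theorem ConvexAtScale.comp_lineMap (hD : Convex ℝ D) (h : ConvexAtScale D G r) {p q : E}
    (hp : p ∈ D) (hq : q ∈ D) {s : ℝ} (hs : s * dist p q ≤ r) :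
    ConvexAtScale (Icc (0 : ℝ) 1) (fun t => G (AffineMap.lineMap p q t)) s := by
  intro a ha b hb hab t ht
  have hdist : dist (AffineMap.lineMap p q a : E) (AffineMap.lineMap p q b) ≤ r := by
    rw [dist_lineMap_lineMap]
    exact (mul_le_mul_of_nonneg_right hab dist_nonneg).trans hs
  simp only [AffineMap.apply_lineMap (AffineMap.lineMap p q)]
  exact h _ (hD.lineMap_mem hp hq ha) _ (hD.lineMap_mem hp hq hb) hdist t ht

-- Convexity on `[0, 2/3]` and `[1/3, 1]` bounds `g (1/3)` and `g (2/3)` in terms of each other;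
-- solving the two inequalities puts both below the chord.
theorem ConvexAtScale.le_lineMap_of_two_thirds {g : ℝ → ℝ}
    (h : ConvexAtScale (Icc (0 : ℝ) 1) g (2 / 3)) {t : ℝ} (ht : t ∈ Icc (0 : ℝ) 1) :
    g t ≤ AffineMap.lineMap (g 0) (g 1) t := by
  have on_left : ∀ s ∈ Icc (0 : ℝ) 1, g (2 / 3 * s) ≤ s * (g (2 / 3) - g 0) + g 0 := fun s hs => by
    have := h 0 (by norm_num) (2 / 3) (by norm_num) (by norm_num [Real.dist_eq]) s hs
    rw [AffineMap.lineMap_apply_ring', AffineMap.lineMap_apply_ring'] at this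
    convert this using 2
    ring
  have on_right : ∀ s ∈ Icc (0 : ℝ) 1,
      g (1 / 3 + 2 / 3 * s) ≤ s * (g 1 - g (1 / 3)) + g (1 / 3) := fun s hs => by
    have := h (1 / 3) (by norm_num) 1 (by norm_num) (by norm_num [Real.dist_eq]) s hs
    rw [AffineMap.lineMap_apply_ring', AffineMap.lineMap_apply_ring'] at this
    convert this using 2
    ring
  have h₁ : g (1 / 3) ≤ (g 0 + g (2 / 3)) / 2 := by
    convert on_left (1 / 2) (by norm_num) using 1 <;> ring_nf
  have h₂ : g (2 / 3) ≤ (g (1 / 3) + g 1) / 2 := by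
    convert on_right (1 / 2) (by norm_num) using 1 <;> ring_nf
  rw [AffineMap.lineMap_apply_ring']
  rcases le_total t (2 / 3) with ht_le | le_ht
  · have := on_left (3 / 2 * t) ⟨by linarith [ht.1], by linarith⟩
    rw [show 2 / 3 * (3 / 2 * t) = t by ring] at this
    nlinarith [ht.1]
  · have := on_right (3 / 2 * t - 1 / 2) ⟨by linarith, by linarith [ht.2]⟩
    rw [show 1 / 3 + 2 / 3 * (3 / 2 * t - 1 / 2) = t by ring] at this
    nlinarith [ht.2]

theorem ConvexAtScale.three_halves_mul (hD : Convex ℝ D) (h : ConvexAtScale D G r) :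
    ConvexAtScale D G (3 / 2 * r) := by
  intro p hp q hq hpq t ht
  simpa using (h.comp_lineMap hD hp hq (by linarith)).le_lineMap_of_two_thirds ht

theorem ConvexAtScale.convexOn (hD : Convex ℝ D) (hr : 0 < r) (h : ConvexAtScale D G r) :
    ConvexOn ℝ D G := by
  have scale : ∀ k : ℕ, ConvexAtScale D G ((3 / 2) ^ k * r) := by
    intro k
    induction k with
    | zero => simpa using h
    | succ k ih =>
      rw [pow_succ', mul_assoc]
      exact ih.three_halves_mul hD
  refine ⟨hD, fun p hp q hq a b ha hb hab => ?_⟩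
  obtain ⟨k, hk⟩ := pow_unbounded_of_one_lt (dist p q / r) (show (1 : ℝ) < 3 / 2 by norm_num)
  obtain rfl : a = 1 - b := by linarith
  have := scale k p hp q hq ((div_lt_iff₀ hr).1 hk).le b ⟨hb, by linarith⟩
  rwa [AffineMap.lineMap_apply_module, AffineMap.lineMap_apply_module] at this

end LocalToGlobal

section Uncrossing

variable {ι : Type*} [Fintype ι] {w : ι → ℝ}

/-- The weights obtained from `w` by moving mass `m` from each of `i`, `j` to `k`, `l`. -/
def transfer [DecidableEq ι] (w : ι → ℝ) (m : ℝ) (i j k l : ι) : ι → ℝ :=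
  w + m • (Pi.single k 1 + Pi.single l 1 - Pi.single i 1 - Pi.single j 1)

theorem sum_transfer_smul [DecidableEq ι] {M : Type*} [AddCommGroup M] [Module ℝ M]
    (w : ι → ℝ) (m : ℝ) (i j k l : ι) (g : ι → M) :
    ∑ a, transfer w m i j k l a • g a = ∑ a, w a • g a + m • (g k + g l - (g i + g j)) := by
  simp only [transfer, ← Fintype.linearCombination_apply ℝ g, map_add, map_smul, map_sub,
    Fintype.linearCombination_apply_single, one_smul, sub_sub]

theorem exists_transfer_mem_stdSimplex [DecidableEq ι] (hw : w ∈ stdSimplex ℝ ι) {i j : ι}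
    (hi : 0 < w i) (hj : 0 < w j) (k l : ι) :
    ∃ m : ℝ, 0 < m ∧ transfer w m i j k l ∈ stdSimplex ℝ ι := by
  set m := min (w i) (w j) / 2 with hm_def
  have hm : 0 < m := half_pos (lt_min hi hj)
  have single_nonneg : ∀ a v : ι, 0 ≤ (Pi.single a 1 : ι → ℝ) v := fun a =>
    (Pi.single_nonneg.2 zero_le_one : (0 : ι → ℝ) ≤ Pi.single a 1)
  have mul_single_le : ∀ a, m ≤ w a / 2 → ∀ v, m * (Pi.single a 1 : ι → ℝ) v ≤ w v / 2 := by
    intro a ha v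
    rcases eq_or_ne v a with rfl | hva
    · simpa using ha
    · simpa [hva] using div_nonneg (hw.1 v) zero_le_two
  refine ⟨m, hm, fun v => ?_, ?_⟩
  · have hvi := mul_single_le i (by linarith [min_le_left (w i) (w j)]) v
    have hvj := mul_single_le j (by linarith [min_le_right (w i) (w j)]) v
    have hvk := mul_nonneg hm.le (single_nonneg k v)
    have hvl := mul_nonneg hm.le (single_nonneg l v)
    simp only [transfer, Pi.add_apply, Pi.smul_apply, Pi.sub_apply, smul_eq_mul]
    linarith
  · simpa [hw.2] using sum_transfer_smul w m i j k l fun _ => (1 : ℝ)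

-- Among the convex combinations with the same barycenter and no greater cost `F`, take one
-- minimizing `Q`: if two crossing points both carried weight, moving some of it would lower `Q`.
theorem exists_uncrossed {E : Type*} [AddCommGroup E] [Module ℝ E] [TopologicalSpace E]
    [T2Space E] [ContinuousAdd E] [ContinuousSMul ℝ E] {φ : ι → E} {F Q : ι → ℝ}
    {crossing : ι → ι → Prop}
    (uncross : ∀ i j, crossing i j → ∃ k l, φ k + φ l = φ i + φ j ∧ F k + F l ≤ F i + F j ∧
      Q k + Q l < Q i + Q j)
    (hw : w ∈ stdSimplex ℝ ι) :
    ∃ w' ∈ stdSimplex ℝ ι, ∑ i, w' i • φ i = ∑ i, w i • φ i ∧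
      ∑ i, w' i * F i ≤ ∑ i, w i * F i ∧ ∀ i j, 0 < w' i → 0 < w' j → ¬ crossing i j := by
  classical
  have hK : IsCompact (stdSimplex ℝ ι ∩
      {v | ∑ i, v i • φ i = ∑ i, w i • φ i ∧ ∑ i, v i * F i ≤ ∑ i, w i * F i}) :=
    (isCompact_stdSimplex ℝ ι).inter_right <|
      (isClosed_eq (by fun_prop) continuous_const).and (isClosed_le (by fun_prop) continuous_const)
  obtain ⟨v, ⟨hv, hvφ, hvF⟩, hmin⟩ := hK.exists_isMinOn ⟨w, hw, rfl, le_rfl⟩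
    (show Continuous fun v : ι → ℝ => ∑ i, v i * Q i by fun_prop).continuousOn
  refine ⟨v, hv, hvφ, hvF, fun i j hi hj hij => ?_⟩
  obtain ⟨k, l, hφ, hF, hQ⟩ := uncross i j hij
  obtain ⟨m, hm, hv'⟩ := exists_transfer_mem_stdSimplex hv hi hj k l
  have hφ' : ∑ a, transfer v m i j k l a • φ a = ∑ a, w a • φ a := by
    rw [sum_transfer_smul, hφ, sub_self, smul_zero, add_zero, hvφ]
  have hF' : ∑ a, transfer v m i j k l a * F a ≤ ∑ a, w a * F a := by
    have hsum := sum_transfer_smul v m i j k l F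
    simp only [smul_eq_mul] at hsum
    nlinarith
  have hQ' : ∑ a, transfer v m i j k l a * Q a < ∑ a, v a * Q a := by
    have hsum := sum_transfer_smul v m i j k l Q
    simp only [smul_eq_mul] at hsum
    nlinarith
  exact hQ'.not_ge (hmin ⟨hv', hφ', hF'⟩)

end Uncrossing

section Rounding

variable {n : ℕ} {x y : Fin n → ℤ} {S T : Set (Fin n → ℤ)}

theorem avgDown_apply (x y : Fin n → ℤ) (i : Fin n) : avgDown x y i = (x i + y i) / 2 := by
  simpa [avgDown] using Rat.floor_intCast_div_natCast (x i + y i) 2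

theorem avgUp_apply (x y : Fin n → ℤ) (i : Fin n) : avgUp x y i = (x i + y i + 1) / 2 := by
  have h : avgUp x y i = -(-(x i + y i) / 2) := by
    simpa [avgUp] using Rat.ceil_intCast_div_natCast (x i + y i) 2
  omega

theorem avgUp_add_avgDown (x y : Fin n → ℤ) : avgUp x y + avgDown x y = x + y := by
  ext i
  simp only [Pi.add_apply, avgUp_apply, avgDown_apply]
  omega

theorem natAbs_avgUp_sub_avgDown_le (x y : Fin n → ℤ) (i : Fin n) :
    (avgUp x y i - avgDown x y i).natAbs ≤ (x i - y i).natAbs := by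
  rw [avgUp_apply, avgDown_apply]
  omega

theorem natAbs_avgUp_sub_avgDown_le_one (x y : Fin n → ℤ) (i : Fin n) :
    (avgUp x y i - avgDown x y i).natAbs ≤ 1 := by
  rw [avgUp_apply, avgDown_apply]
  omega

theorem linf_le_iff {z : Fin n → ℤ} {k : ℕ} : linf z ≤ k ↔ ∀ i, (z i).natAbs ≤ k := by
  simp [linf, Finset.sup_le_iff]

-- The parallelogram identity: rounding preserves the coordinate sums and shrinks the differences.
theorem sum_sq_avg_lt (h : 2 ≤ linf (x - y)) :
    ∑ i, avgUp x y i ^ 2 + ∑ i, avgDown x y i ^ 2 < ∑ i, x i ^ 2 + ∑ i, y i ^ 2 := by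
  obtain ⟨j, hj⟩ : ∃ j, 1 < (x j - y j).natAbs := by
    by_contra! hle
    have : linf (x - y) ≤ 1 := linf_le_iff.2 hle
    omega
  have sum_eq : ∀ i, avgUp x y i + avgDown x y i = x i + y i := congrFun (avgUp_add_avgDown x y)
  rw [← Finset.sum_add_distrib, ← Finset.sum_add_distrib]
  refine Finset.sum_lt_sum (fun i _ => ?_) ⟨j, Finset.mem_univ j, ?_⟩
  · have := Int.natAbs_le_iff_sq_le.1 (natAbs_avgUp_sub_avgDown_le x y i)
    nlinarith [congrArg (· ^ 2) (sum_eq i)]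
  · have := Int.natAbs_lt_iff_sq_lt.1 ((natAbs_avgUp_sub_avgDown_le_one x y j).trans_lt hj)
    nlinarith [congrArg (· ^ 2) (sum_eq j)]

theorem DMCSet.inter (hS : DMCSet S) (hT : DMCSet T) : DMCSet (S ∩ T) :=
  fun _ hx _ hy hxy =>
    have hSavg := hS hx.1 hy.1 hxy
    have hTavg := hT hx.2 hy.2 hxy
    ⟨⟨hSavg.1, hTavg.1⟩, hSavg.2, hTavg.2⟩

theorem dmcSet_Icc (α β : Fin n → ℤ) : DMCSet (Icc α β) := by
  intro x hx y hy _
  have mem : ∀ i, (α i ≤ avgUp x y i ∧ avgUp x y i ≤ β i) ∧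
      α i ≤ avgDown x y i ∧ avgDown x y i ≤ β i := fun i => by
    have hαx : α i ≤ x i := hx.1 i
    have hxβ : x i ≤ β i := hx.2 i
    have hαy : α i ≤ y i := hy.1 i
    have hyβ : y i ≤ β i := hy.2 i
    rw [avgUp_apply, avgDown_apply]
    omega
  exact ⟨⟨fun i => (mem i).1.1, fun i => (mem i).1.2⟩, fun i => (mem i).2.1, fun i => (mem i).2.2⟩

theorem linf_sub_le_of_mem_Icc {α β : Fin n → ℤ} (hx : x ∈ Icc α β) (hy : y ∈ Icc α β) :
    linf (x - y) ≤ linf (β - α) := by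
  refine linf_le_iff.2 fun i => le_trans ?_ (linf_le_iff.1 le_rfl i)
  have hαx : α i ≤ x i := hx.1 i
  have hxβ : x i ≤ β i := hx.2 i
  have hαy : α i ≤ y i := hy.1 i
  have hyβ : y i ≤ β i := hy.2 i
  simp only [Pi.sub_apply]
  omega

end Rounding

section IntegralNeighborhood

variable {n : ℕ}

/-- An integer vector, regarded as a point of `ℝⁿ`. -/
def realPoint (z : Fin n → ℤ) : Fin n → ℝ := fun i => z i

@[simp]
theorem realPoint_apply (z : Fin n → ℤ) (i : Fin n) : realPoint z i = z i := rfl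

theorem realPoint_add (y z : Fin n → ℤ) : realPoint (y + z) = realPoint y + realPoint z := by
  ext i
  simp

theorem realPoint_injective : Function.Injective (realPoint : (Fin n → ℤ) → Fin n → ℝ) :=
  fun _ _ h => funext fun i => Int.cast_injective (congrFun h i)

theorem intNbhd_subset_Icc {x : Fin n → ℝ} {α β : Fin n → ℤ}
    (hx : x ∈ Icc (realPoint α) (realPoint β)) : intNbhd x ⊆ Icc α β := by
  intro z hz
  refine ⟨fun i => ?_, fun i => ?_⟩
  · have hαx : (α i : ℝ) ≤ x i := hx.1 i
    have : (α i : ℝ) < z i + 1 := by linarith [(abs_lt.1 (hz i)).2]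
    exact Int.lt_add_one_iff.1 (by exact_mod_cast this)
  · have hxβ : x i ≤ β i := hx.2 i
    have : (z i : ℝ) < β i + 1 := by linarith [(abs_lt.1 (hz i)).1]
    exact Int.lt_add_one_iff.1 (by exact_mod_cast this)

theorem finite_intNbhd (x : Fin n → ℝ) : (intNbhd x).Finite :=
  (finite_Icc (fun i => ⌊x i⌋) fun i => ⌈x i⌉).subset <|
    intNbhd_subset_Icc ⟨fun i => Int.floor_le (x i), fun i => Int.le_ceil (x i)⟩

theorem exists_intNbhd_subset_Icc_of_dist_le_one {p q : Fin n → ℝ} (hpq : dist p q ≤ 1) :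
    ∃ α : Fin n → ℤ, intNbhd p ⊆ Icc α (α + 2) ∧ intNbhd q ⊆ Icc α (α + 2) := by
  have close : ∀ i, |p i - q i| ≤ 1 := fun i => (dist_le_pi_dist p q i).trans hpq
  set α : Fin n → ℤ := fun i => ⌊min (p i) (q i)⌋
  have floor_le : ∀ i, (α i : ℝ) ≤ min (p i) (q i) := fun i => Int.floor_le _
  have lt_floor : ∀ i, min (p i) (q i) < α i + 1 := fun i => Int.lt_floor_add_one _
  have max_le : ∀ i, max (p i) (q i) ≤ realPoint (α + 2) i := fun i => by
    simp only [realPoint_apply, Pi.add_apply, Pi.ofNat_apply, Int.cast_add, Int.cast_ofNat]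
    linarith [lt_floor i, max_sub_min_eq_abs' (p i) (q i), close i]
  refine ⟨α, intNbhd_subset_Icc ⟨fun i => ?_, fun i => ?_⟩,
    intNbhd_subset_Icc ⟨fun i => ?_, fun i => ?_⟩⟩
  · exact (floor_le i).trans (min_le_left _ _)
  · exact (le_max_left _ _).trans (max_le i)
  · exact (floor_le i).trans (min_le_right _ _)
  · exact (le_max_right _ _).trans (max_le i)

theorem mem_intNbhd_of_linf_sub_le_one {ι : Type*} [Fintype ι] {w : ι → ℝ} (hw : w ∈ stdSimplex ℝ ι)
    {z : ι → Fin n → ℤ} (hz : ∀ i j, 0 < w i → 0 < w j → linf (z i - z j) ≤ 1) {i : ι}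
    (hi : 0 < w i) : z i ∈ intNbhd (∑ j, w j • realPoint (z j)) := by
  intro k
  have hsub : (∑ j, w j • realPoint (z j)) k - z i k = ∑ j, w j * ((z j k : ℝ) - z i k) := by
    simp [mul_sub, Finset.sum_sub_distrib, ← Finset.sum_mul, hw.2]
  have term_le : ∀ j, |w j * ((z j k : ℝ) - z i k)| ≤ w j := by
    intro j
    rw [abs_mul, abs_of_nonneg (hw.1 j)]
    rcases (hw.1 j).eq_or_lt with h0 | hj
    · simp [← h0]
    · have : |z j k - z i k| ≤ 1 := by
        rw [Int.abs_eq_natAbs]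
        exact_mod_cast linf_le_iff.1 (hz j i hj hi) k
      exact mul_le_of_le_one_right (hw.1 j) (by exact_mod_cast this)
  calc |(∑ j, w j • realPoint (z j)) k - z i k|
      ≤ ∑ j, |w j * ((z j k : ℝ) - z i k)| := by
        rw [hsub]
        exact Finset.abs_sum_le_sum_abs _ _
    _ < ∑ j, w j :=
        Finset.sum_lt_sum (fun j _ => term_le j) ⟨i, Finset.mem_univ i, by simpa using hi⟩
    _ = 1 := hw.2

end IntegralNeighborhood

section GraphHull

variable {n : ℕ} {F : (Fin n → ℤ) → ℝ} {S T : Set (Fin n → ℤ)} {x : Fin n → ℝ} {c : ℝ}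

/-- The convex hull in `ℝⁿ × ℝ` of the graph of `F` over `S`: the pairs `(x, c)` such that some
convex combination of points of `S` has barycenter `x` and `F`-cost `c`. -/
def graphHull (F : (Fin n → ℤ) → ℝ) (S : Set (Fin n → ℤ)) : Set ((Fin n → ℝ) × ℝ) :=
  convexHull ℝ ((fun z => (realPoint z, F z)) '' S)

theorem graphHull_mono (F : (Fin n → ℤ) → ℝ) (h : S ⊆ T) : graphHull F S ⊆ graphHull F T :=
  convexHull_mono (image_mono h)

theorem isCompact_graphHull (F : (Fin n → ℤ) → ℝ) (hS : S.Finite) : IsCompact (graphHull F S) :=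
  (hS.image _).isCompact_convexHull ℝ

theorem exists_mem_graphHull_iff :
    (∃ c, (x, c) ∈ graphHull F S) ↔ x ∈ convexHull ℝ (realPoint '' S) := by
  have fst_image : Prod.fst '' graphHull F S = convexHull ℝ (realPoint '' S) := by
    have := (LinearMap.fst ℝ (Fin n → ℝ) ℝ).image_convexHull ((fun z => (realPoint z, F z)) '' S)
    rwa [image_image] at this
  simp [← fst_image]

theorem sum_mem_graphHull {ι : Type*} [Fintype ι] {w : ι → ℝ} (hw : w ∈ stdSimplex ℝ ι)
    {z : ι → Fin n → ℤ} (hz : ∀ i, 0 < w i → z i ∈ S) :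
    (∑ i, w i • realPoint (z i), ∑ i, w i * F (z i)) ∈ graphHull F S := by
  have := (convex_convexHull ℝ ((fun z => (realPoint z, F z)) '' S)).finsum_mem
    (z := fun i => (realPoint (z i), F (z i))) hw.1 (by rw [finsum_eq_sum_of_fintype, hw.2])
    fun i hi => subset_convexHull ℝ _ (mem_image_of_mem _ (hz i ((hw.1 i).lt_of_ne' hi)))
  rw [finsum_eq_sum_of_fintype] at this
  simpa only [graphHull, Prod.smul_mk, smul_eq_mul, ← prod_mk_sum] using this

theorem exists_weights_of_mem_graphHull {t : Finset (Fin n → ℤ)} (h : (x, c) ∈ graphHull F t) :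
    ∃ w : (Fin n → ℤ) → ℝ, (∀ z ∈ t, 0 ≤ w z) ∧ ∑ z ∈ t, w z = 1 ∧
      ∑ z ∈ t, w z • realPoint z = x ∧ ∑ z ∈ t, w z * F z = c := by
  classical
  have hinj : Function.Injective fun z => (realPoint z, F z) :=
    fun _ _ hz => realPoint_injective (congrArg Prod.fst hz)
  rw [graphHull, ← Finset.coe_image, Finset.mem_convexHull'] at h
  obtain ⟨w, hw, hsum, hbar⟩ := h
  rw [Finset.sum_image hinj.injOn] at hsum hbar
  refine ⟨fun z => w (realPoint z, F z), fun z hz => hw _ (Finset.mem_image_of_mem _ hz), hsum, ?_⟩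
  simpa [Prod.ext_iff, Prod.fst_sum, Prod.snd_sum] using hbar

theorem exists_mem_graphHull_inter_Icc (h : (x, c) ∈ graphHull F S) :
    ∃ α β : Fin n → ℤ, (x, c) ∈ graphHull F (S ∩ Icc α β) := by
  rw [graphHull, mem_convexHull_iff_exists_fintype] at h
  obtain ⟨ι, _, w, p, hw, hsum, hp, hx⟩ := h
  choose z hzS hz using hp
  obtain ⟨α, hα⟩ := (finite_range z).bddBelow
  obtain ⟨β, hβ⟩ := (finite_range z).bddAbove
  exact ⟨α, β, mem_convexHull_of_exists_fintype w p hw hsum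
    (fun i => ⟨z i, ⟨hzS i, hα (mem_range_self i), hβ (mem_range_self i)⟩, hz i⟩) hx⟩

theorem DMCSet.exists_mem_graphHull_inter_intNbhd (hS : DMCSet S)
    (hF : ∀ y ∈ S, ∀ z ∈ S, 2 ≤ linf (y - z) → F (avgUp y z) + F (avgDown y z) ≤ F y + F z)
    (h : (x, c) ∈ graphHull F S) : ∃ c' ≤ c, (x, c') ∈ graphHull F (S ∩ intNbhd x) := by
  obtain ⟨α, β, hbox⟩ := exists_mem_graphHull_inter_Icc h
  have hbox_dmc : DMCSet (S ∩ Icc α β) := hS.inter (dmcSet_Icc α β)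
  obtain ⟨t, ht⟩ := ((finite_Icc α β).inter_of_right S).exists_finset_coe
  rw [← ht] at hbox hbox_dmc
  have mem_S : ∀ z : t, z.1 ∈ S := fun z => (ht.subset z.2).1
  obtain ⟨w, hw, hsum, rfl, rfl⟩ := exists_weights_of_mem_graphHull hbox
  obtain ⟨v, hv, hvx, hvF, hfar⟩ := exists_uncrossed (w := fun z : t => w z)
    (φ := fun z : t => realPoint z.1) (F := fun z : t => F z)
    (Q := fun z : t => ∑ i, (z.1 i : ℝ) ^ 2) (crossing := fun y z : t => 2 ≤ linf (y.1 - z.1))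
    (fun y z hyz => by
      obtain ⟨hup, hdown⟩ := hbox_dmc y.2 z.2 hyz
      refine ⟨⟨_, hup⟩, ⟨_, hdown⟩, ?_, hF _ (mem_S y) _ (mem_S z) hyz, ?_⟩
      · simp only [← realPoint_add, avgUp_add_avgDown]
      · exact_mod_cast sum_sq_avg_lt hyz)
    ⟨fun z => hw z z.2, by rwa [Finset.sum_coe_sort t w]⟩
  rw [Finset.sum_coe_sort t fun z => w z • realPoint z] at hvx
  rw [Finset.sum_coe_sort t fun z => w z * F z] at hvF
  refine ⟨_, hvF, hvx ▸ sum_mem_graphHull hv fun z hz => ⟨mem_S z, ?_⟩⟩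
  exact mem_intNbhd_of_linf_sub_le_one hv
    (fun y z hy hz => Nat.lt_succ_iff.1 (not_le.1 (hfar y z hy hz))) hz

theorem DMCSet.mem_convexHull_inter_intNbhd (hS : DMCSet S)
    (hx : x ∈ convexHull ℝ (realPoint '' S)) :
    x ∈ convexHull ℝ (realPoint '' (S ∩ intNbhd x)) := by
  obtain ⟨c, hc⟩ := (exists_mem_graphHull_iff (F := 0)).2 hx
  obtain ⟨c', -, hc'⟩ := hS.exists_mem_graphHull_inter_intNbhd (fun _ _ _ _ _ => le_rfl) hc
  exact exists_mem_graphHull_iff.1 ⟨c', hc'⟩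

end GraphHull

section ERealValued

theorem coe_mul_ne_bot {a : ℝ} (ha : 0 ≤ a) {y : EReal} (hy : y ≠ ⊥) : (a : EReal) * y ≠ ⊥ := by
  rw [EReal.mul_ne_bot]
  simp [hy, EReal.coe_nonneg.2 ha]

theorem coe_finsetSum_real {ι : Type*} (t : Finset ι) (g : ι → ℝ) :
    ((∑ i ∈ t, g i : ℝ) : EReal) = ∑ i ∈ t, (g i : EReal) :=
  map_sum (⟨⟨(↑), EReal.coe_zero⟩, EReal.coe_add⟩ : ℝ →+ EReal) g t

theorem sum_eq_top_of_ne_bot {ι : Type*} {t : Finset ι} {g : ι → EReal}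
    (hg : ∀ i ∈ t, g i ≠ ⊥) {i : ι} (hi : i ∈ t) (htop : g i = ⊤) : ∑ i ∈ t, g i = ⊤ := by
  classical
  rw [← Finset.add_sum_erase t _ hi, htop]
  refine EReal.top_add_of_ne_bot (Finset.sum_induction _ (· ≠ ⊥) ?_ EReal.zero_ne_bot ?_)
  · exact fun a b ha hb => EReal.add_ne_bot_iff.2 ⟨ha, hb⟩
  · exact fun j hj => hg j (Finset.mem_of_mem_erase hj)

theorem sum_coe_mul_eq_coe {ι : Type*} {t : Finset ι} {w : ι → ℝ} {g : ι → EReal}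
    (hbot : ∀ i ∈ t, g i ≠ ⊥) (htop : ∀ i ∈ t, w i ≠ 0 → g i ≠ ⊤) :
    ∑ i ∈ t, (w i : EReal) * g i = ((∑ i ∈ t, w i * (g i).toReal : ℝ) : EReal) := by
  rw [coe_finsetSum_real]
  refine Finset.sum_congr rfl fun i hi => ?_
  rcases eq_or_ne (w i) 0 with h0 | h0
  · simp [h0]
  · rw [EReal.coe_mul, EReal.coe_toReal (htop i hi h0) (hbot i hi)]

theorem le_of_convexOn_toReal {E : Type*} [AddCommGroup E] [Module ℝ E] {g : E → EReal}
    (hbot : ∀ x, g x ≠ ⊥) (hg : ConvexOn ℝ {x | g x ≠ ⊤} fun x => (g x).toReal) {u v : E}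
    {a b : ℝ} (ha : 0 ≤ a) (hb : 0 ≤ b) (hab : a + b = 1) :
    g (a • u + b • v) ≤ a * g u + b * g v := by
  rcases ha.eq_or_lt with rfl | ha'
  · obtain rfl : b = 1 := by linarith
    simp
  rcases hb.eq_or_lt with rfl | hb'
  · obtain rfl : a = 1 := by linarith
    simp
  by_cases hu : g u = ⊤
  · rw [hu, EReal.coe_mul_top_of_pos ha', EReal.top_add_of_ne_bot (coe_mul_ne_bot hb (hbot v))]
    exact le_top
  by_cases hv : g v = ⊤
  · rw [hv, EReal.coe_mul_top_of_pos hb', EReal.add_top_of_ne_bot (coe_mul_ne_bot ha (hbot u))]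
    exact le_top
  have hle := hg.2 hu hv ha hb hab
  rw [← EReal.coe_toReal hu (hbot u), ← EReal.coe_toReal hv (hbot v),
    ← EReal.coe_toReal (hg.1 hu hv ha hb hab) (hbot _)]
  exact_mod_cast hle

end ERealValued

section Envelope

variable {n : ℕ} {f : (Fin n → ℤ) → EReal} {x : Fin n → ℝ} {c : ℝ}

/-- The graph hull of `f` over the part of its effective domain in `S`. Values are converted by
`EReal.toReal`, which is faithful there when `f` never takes the value `⊥`. -/
def effGraphHull (f : (Fin n → ℤ) → EReal) (S : Set (Fin n → ℤ)) : Set ((Fin n → ℝ) × ℝ) :=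
  graphHull (fun z => (f z).toReal) (effDom f ∩ S)

theorem envelope_le_of_mem_effGraphHull (hf : ∀ z, f z ≠ ⊥)
    (h : (x, c) ∈ effGraphHull f (intNbhd x)) : envelope f x ≤ c := by
  obtain ⟨t, ht⟩ := ((finite_intNbhd x).inter_of_right (effDom f)).exists_finset_coe
  rw [effGraphHull, ← ht] at h
  obtain ⟨w, hw, hsum, hbar, rfl⟩ := exists_weights_of_mem_graphHull h
  refine sInf_le ⟨t, w, fun z hz => (ht.subset hz).2, hw, hsum, fun i => ?_, ?_⟩
  · simpa using congrFun hbar i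
  · exact (sum_coe_mul_eq_coe (fun z _ => hf z) fun z hz _ => (ht.subset hz).1).symm

theorem exists_mem_effGraphHull_of_envelope_lt (hf : ∀ z, f z ≠ ⊥) {v : EReal}
    (h : envelope f x < v) : ∃ c : ℝ, (c : EReal) < v ∧ (x, c) ∈ effGraphHull f (intNbhd x) := by
  obtain ⟨_, ⟨t, w, hnbhd, hw, hsum, hbar, rfl⟩, hlt⟩ := sInf_lt_iff.1 h
  have mem_effDom : ∀ z ∈ t, w z ≠ 0 → f z ≠ ⊤ := fun z hz hwz htop =>
    hlt.ne_top <| sum_eq_top_of_ne_bot (fun y hy => coe_mul_ne_bot (hw y hy) (hf y)) hz <| by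
      rw [htop, EReal.coe_mul_top_of_pos ((hw z hz).lt_of_ne' hwz)]
  have hx : ∑ z : t, w z • realPoint z.1 = x := by
    rw [Finset.sum_coe_sort t fun z => w z • realPoint z]
    ext i
    simpa using hbar i
  have hmem := sum_mem_graphHull (F := fun z => (f z).toReal) (S := effDom f ∩ intNbhd x)
    (w := fun z : t => w z) (z := Subtype.val)
    ⟨fun z => hw z z.2, by rwa [Finset.sum_coe_sort t w]⟩
    fun z hz => ⟨mem_effDom z z.2 hz.ne', hnbhd z z.2⟩
  rw [hx, Finset.sum_coe_sort t fun z => w z * (f z).toReal] at hmem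
  exact ⟨_, by rwa [← sum_coe_mul_eq_coe (fun z _ => hf z) mem_effDom], hmem⟩

theorem exists_envelope_eq_coe (hf : ∀ z, f z ≠ ⊥) (h : envelope f x ≠ ⊤) :
    ∃ c : ℝ, envelope f x = c ∧ (x, c) ∈ effGraphHull f (intNbhd x) := by
  have hcompact : IsCompact (effGraphHull f (intNbhd x) ∩ {p | p.1 = x}) :=
    (isCompact_graphHull _ ((finite_intNbhd x).inter_of_right _)).inter_right
      (isClosed_eq continuous_fst continuous_const)
  obtain ⟨c₀, -, hc₀⟩ := exists_mem_effGraphHull_of_envelope_lt hf h.lt_top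
  obtain ⟨⟨_, c⟩, ⟨hc, rfl⟩, hmin⟩ :=
    hcompact.exists_isMinOn ⟨(x, c₀), hc₀, rfl⟩ continuous_snd.continuousOn
  refine ⟨c, (envelope_le_of_mem_effGraphHull hf hc).antisymm (not_lt.1 fun hlt => ?_), hc⟩
  obtain ⟨c', hc'c, hc'⟩ := exists_mem_effGraphHull_of_envelope_lt hf hlt
  exact (EReal.coe_lt_coe_iff.1 hc'c).not_ge (hmin ⟨hc', rfl⟩)

theorem envelope_ne_bot (hf : ∀ z, f z ≠ ⊥) (x : Fin n → ℝ) : envelope f x ≠ ⊥ := by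
  by_cases h : envelope f x = ⊤
  · simp [h]
  · obtain ⟨c, hc, -⟩ := exists_envelope_eq_coe hf h
    exact hc ▸ EReal.coe_ne_bot c

theorem envelope_ne_top_iff (hf : ∀ z, f z ≠ ⊥) :
    envelope f x ≠ ⊤ ↔ x ∈ convexHull ℝ (realPoint '' (effDom f ∩ intNbhd x)) := by
  rw [← exists_mem_graphHull_iff (F := fun z => (f z).toReal)]
  constructor
  · intro h
    obtain ⟨c, -, hc⟩ := exists_envelope_eq_coe hf h
    exact ⟨c, hc⟩
  · rintro ⟨c, hc⟩
    exact ((envelope_le_of_mem_effGraphHull hf hc).trans_lt (EReal.coe_lt_top c)).ne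

theorem convex_setOf_envelope_ne_top (hf : ∀ z, f z ≠ ⊥) (hdom : DMCSet (effDom f)) :
    Convex ℝ {x | envelope f x ≠ ⊤} := by
  have : {x | envelope f x ≠ ⊤} = convexHull ℝ (realPoint '' effDom f) := by
    ext x
    rw [mem_ofPred_eq, envelope_ne_top_iff hf]
    exact ⟨fun hx => convexHull_mono (image_mono inter_subset_left) hx,
      hdom.mem_convexHull_inter_intNbhd⟩
  exact this ▸ convex_convexHull ℝ _

end Envelope

section LocallyDMC

variable {n : ℕ} {f : (Fin n → ℤ) → EReal} {x : Fin n → ℝ} {c : ℝ}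

theorem LocallyDMC.toReal_avg_add_le (h : LocallyDMC f) (hf : ∀ z, f z ≠ ⊥) {y z : Fin n → ℤ}
    (hy : y ∈ effDom f) (hz : z ∈ effDom f) (hyz : linf (y - z) = 2) :
    (f (avgUp y z)).toReal + (f (avgDown y z)).toReal ≤ (f y).toReal + (f z).toReal := by
  obtain ⟨hup, hdown⟩ := h.1 hy hz hyz.ge
  have hle : f (avgUp y z) + f (avgDown y z) ≤ f y + f z := h.2 y z hyz
  rw [← EReal.coe_toReal hup (hf _), ← EReal.coe_toReal hdown (hf _),
    ← EReal.coe_toReal hy (hf y), ← EReal.coe_toReal hz (hf z)] at hle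
  exact_mod_cast hle

theorem LocallyDMC.envelope_le_of_mem_effGraphHull_Icc (h : LocallyDMC f) (hf : ∀ z, f z ≠ ⊥)
    {α β : Fin n → ℤ} (hαβ : linf (β - α) ≤ 2) (hx : (x, c) ∈ effGraphHull f (Icc α β)) :
    envelope f x ≤ c := by
  obtain ⟨c', hc'c, hc'⟩ := (h.1.inter (dmcSet_Icc α β)).exists_mem_graphHull_inter_intNbhd
    (fun y hy z hz hyz => h.toReal_avg_add_le hf hy.1 hz.1 <|
      ((linf_sub_le_of_mem_Icc hy.2 hz.2).trans hαβ).antisymm hyz) hx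
  exact (envelope_le_of_mem_effGraphHull hf
    (graphHull_mono _ (inter_subset_inter_left _ inter_subset_left) hc')).trans
    (EReal.coe_le_coe_iff.2 hc'c)

theorem LocallyDMC.convexAtScale_envelope (h : LocallyDMC f) (hf : ∀ z, f z ≠ ⊥) :
    ConvexAtScale {x | envelope f x ≠ ⊤} (fun x => (envelope f x).toReal) 1 := by
  intro p hp q hq hpq t ht
  obtain ⟨α, hpα, hqα⟩ := exists_intNbhd_subset_Icc_of_dist_le_one hpq
  obtain ⟨b, hb, hpb⟩ := exists_envelope_eq_coe hf hp
  obtain ⟨c, hc, hqc⟩ := exists_envelope_eq_coe hf hq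
  have hmem : (AffineMap.lineMap p q t, AffineMap.lineMap b c t) ∈
      effGraphHull f (Icc α (α + 2)) := by
    rw [← AffineMap.fst_lineMap (p, b) (q, c), ← AffineMap.snd_lineMap (p, b) (q, c)]
    exact (convex_convexHull ℝ _).lineMap_mem
      (graphHull_mono _ (inter_subset_inter_right _ hpα) hpb)
      (graphHull_mono _ (inter_subset_inter_right _ hqα) hqc) ht
  have hwidth : linf (α + 2 - α) ≤ 2 := linf_le_iff.2 fun i => by simp
  have hle := h.envelope_le_of_mem_effGraphHull_Icc hf hwidth hmem
  simp only [hb, hc, EReal.toReal_coe]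
  exact EReal.toReal_le_toReal hle (envelope_ne_bot hf _) (EReal.coe_ne_top _)

theorem LocallyDMC.convexOn_toReal_envelope (h : LocallyDMC f) (hf : ∀ z, f z ≠ ⊥) :
    ConvexOn ℝ {x | envelope f x ≠ ⊤} fun x => (envelope f x).toReal :=
  (h.convexAtScale_envelope hf).convexOn (convex_setOf_envelope_ne_top hf h.1) one_pos

end LocallyDMC

/-- Every locally discrete midpoint convex function is integrally convex. -/
theorem locallyDMC_integrallyConvex {n : ℕ} (f : (Fin n → ℤ) → EReal)
    (hf : ∀ x, f x ≠ ⊥) (h : LocallyDMC f) :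
    IntegrallyConvexFn f := by
  intro u v a b ha hb hab
  exact le_of_convexOn_toReal (envelope_ne_bot hf) (h.convexOn_toReal_envelope hf) ha hb hab
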